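/- Let l = 3 and m = 5, and consider the trivariate bicycle code with A = x + z⁴ and B = x + y² + z² (the weight-5 [[30,4,5]] code). Its Tanner graph has a spanning subgraph isomorphic to the Cayley graph of ZMod 10 × ZMod 6; that is, the code has a toric layout with μ = 5 and λ = 3. -/

import Mathlib

/-- The translation matrix `P(g)` over `𝔽₂`: `P(g)_{h,h'} = 1` iff `h = g + h'`. -/
def Pmat {G : Type*} [AddGroup G] [DecidableEq G] (g : G) : Matrix G G (ZMod 2) :=
  Matrix.of fun h h' => if h = g + h' then 1 else 0

/-- Vertex types of the Tanner graph: X-checks, Z-checks, L-data, R-data. -/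
inductive VType : Type
  | X | Z | L | R

/-- The Tanner graph of a two-block code with matrices `A`, `B`. -/
def TannerGraph {G : Type*} (A B : Matrix G G (ZMod 2)) :
    SimpleGraph (VType × G) :=
  SimpleGraph.fromRel fun u v =>
    (u.1 = VType.X ∧ v.1 = VType.L ∧ A u.2 v.2 = 1) ∨
    (u.1 = VType.X ∧ v.1 = VType.R ∧ B u.2 v.2 = 1) ∨
    (u.1 = VType.Z ∧ v.1 = VType.L ∧ B v.2 u.2 = 1) ∨
    (u.1 = VType.Z ∧ v.1 = VType.R ∧ A v.2 u.2 = 1)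

/-- The Cayley graph of `ZMod (2μ) × ZMod (2λ)`: distinct vertices `u`, `v` are
adjacent iff `u - v ∈ {(1,0), (-1,0), (0,1), (0,-1)}`. -/
def CayleyGraph (μ lam : ℕ) : SimpleGraph (ZMod (2 * μ) × ZMod (2 * lam)) :=
  SimpleGraph.fromRel fun u v =>
    u - v = (1, 0) ∨ u - v = (-1, 0) ∨ u - v = (0, 1) ∨ u - v = (0, -1)

/-- `x = P(1,0)` over `G = ZMod 3 × ZMod 5`. -/
def xP : Matrix (ZMod 3 × ZMod 5) (ZMod 3 × ZMod 5) (ZMod 2) := Pmat (1, 0)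

/-- `y = P(0,1)` over `G = ZMod 3 × ZMod 5`. -/
def yP : Matrix (ZMod 3 × ZMod 5) (ZMod 3 × ZMod 5) (ZMod 2) := Pmat (0, 1)

/-- `z = P(1,1)` over `G = ZMod 3 × ZMod 5`. -/
def zP : Matrix (ZMod 3 × ZMod 5) (ZMod 3 × ZMod 5) (ZMod 2) := Pmat (1, 1)

/-- `A = x + z⁴` of the weight-5 `[[30,4,5]]` code. -/
def Amat : Matrix (ZMod 3 × ZMod 5) (ZMod 3 × ZMod 5) (ZMod 2) := xP + zP ^ 4

/-- `B = x + y² + z²` of the weight-5 `[[30,4,5]]` code. -/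
def Bmat : Matrix (ZMod 3 × ZMod 5) (ZMod 3 × ZMod 5) (ZMod 2) := xP + yP ^ 2 + zP ^ 2

/- Let `a, a'` be exponents of monomials of `A`, and `b, b'` of `B`. The vertices `X` at `w`, `L` at
`w - a`, `R` at `w - b` and `Z` at `w - a - b` form the corners of a unit cell labelled by `w : G`.
The monomials `a` and `b` give the edges inside each cell, while `a'` and `b'` join the cell `w` to
the cells `w + (a' - a)` and `w + (b' - b)`. So if `a' - a` and `b' - b` correspond to the standard
generators under an isomorphism `ZMod μ × ZMod λ ≃+ G`, the cells tile `ZMod (2μ) × ZMod (2λ)`.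
For the code at hand, the pairs `z⁴, x` of `A` and `z², y²` of `B` have exponent differences
`(0, 1)` and `(1, 0)`, so exchanging the two coordinates is such an isomorphism. -/

/-- A toric layout of a graph: a spanning subgraph isomorphic to the Cayley graph of
`ZMod (2μ) × ZMod (2λ)`. -/
def HasToricLayout {V : Type*} (T : SimpleGraph V) (μ lam : ℕ) : Prop :=
  ∃ H : SimpleGraph V, H ≤ T ∧ Nonempty (H ≃g CayleyGraph μ lam)

theorem CayleyGraph.eq_add_of_adj {μ lam : ℕ} {p q : ZMod (2 * μ) × ZMod (2 * lam)}
    (h : (CayleyGraph μ lam).Adj p q) :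
    q = p + (1, 0) ∨ p = q + (1, 0) ∨ q = p + (0, 1) ∨ p = q + (0, 1) := by
  simp only [CayleyGraph, SimpleGraph.fromRel_adj, Prod.ext_iff, Prod.fst_sub, Prod.snd_sub,
    Prod.fst_add, Prod.snd_add] at h ⊢
  grind

theorem hasToricLayout_of_equiv {V : Type*} {T : SimpleGraph V} {μ lam : ℕ}
    (pos : V ≃ ZMod (2 * μ) × ZMod (2 * lam))
    (right : ∀ u, ∃ v, T.Adj u v ∧ pos v = pos u + (1, 0))
    (up : ∀ u, ∃ v, T.Adj u v ∧ pos v = pos u + (0, 1)) :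
    HasToricLayout T μ lam := by
  have adj_of_pos {d} (step : ∀ u, ∃ v, T.Adj u v ∧ pos v = pos u + d) {u v}
      (h : pos v = pos u + d) : T.Adj u v := by
    obtain ⟨w, huw, hw⟩ := step u
    rwa [pos.injective (h.trans hw.symm)]
  refine ⟨(CayleyGraph μ lam).comap pos, fun u v huv => ?_, ⟨.comap pos _⟩⟩
  rcases CayleyGraph.eq_add_of_adj huv with h | h | h | h
  · exact adj_of_pos right h
  · exact (adj_of_pos right h).symm
  · exact adj_of_pos up h
  · exact (adj_of_pos up h).symm

section Doubling

variable (n : ℕ)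

/-- The homomorphism `ZMod n →+ ZMod (2n)`, `k ↦ 2k`, onto the even residues. -/
def doubling : ZMod n →+ ZMod (2 * n) :=
  ZMod.lift n ⟨(AddMonoidHom.mulLeft 2).comp (Int.castAddHom _), by
    simpa using mod_cast ZMod.natCast_self (2 * n)⟩

theorem doubling_intCast (k : ℤ) : doubling n k = 2 * k :=
  ZMod.lift_coe n _ k

theorem doubling_one : doubling n 1 = 2 := by
  simpa using doubling_intCast n 1

theorem injective_doubling_add_toNat :
    Function.Injective fun p : Bool × ZMod n => doubling n p.2 + (p.1.toNat : ZMod (2 * n)) := by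
  rintro ⟨ε, k⟩ ⟨ε', k'⟩ h
  obtain ⟨k, rfl⟩ := ZMod.intCast_surjective k
  obtain ⟨k', rfl⟩ := ZMod.intCast_surjective k'
  have h_cast : ((2 * k + ε.toNat : ℤ) : ZMod (2 * n)) = (2 * k' + ε'.toNat : ℤ) := by
    simpa [doubling_intCast] using h
  obtain ⟨d, hd⟩ : ∃ d, (2 * k' + ε'.toNat : ℤ) - (2 * k + ε.toNat) = 2 * (n * d) := by
    simpa [dvd_def, mul_assoc] using (ZMod.intCast_eq_intCast_iff_dvd_sub _ _ _).mp h_cast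
  have h_bit : ε = ε' := by
    cases ε <;> cases ε' <;> simp only [Bool.toNat_true, Bool.toNat_false] at hd <;> grind
  subst h_bit
  have h_half : (k : ZMod n) = k' :=
    (ZMod.intCast_eq_intCast_iff_dvd_sub _ _ _).mpr ⟨d, by linarith⟩
  rw [h_half]

theorem surjective_doubling_add_toNat :
    Function.Surjective fun p : Bool × ZMod n => doubling n p.2 + (p.1.toNat : ZMod (2 * n)) := by
  intro x
  obtain ⟨x, rfl⟩ := ZMod.intCast_surjective x
  obtain ⟨k, rfl | rfl⟩ := x.even_or_odd'
  · exact ⟨(false, k), by simp [doubling_intCast]⟩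
  · exact ⟨(true, k), by simp [doubling_intCast]⟩

/-- The decomposition of a residue mod `2n` as `2k + ε`, with `ε = true` for the odd ones. -/
noncomputable def parityEquiv : Bool × ZMod n ≃ ZMod (2 * n) :=
  .ofBijective _ ⟨injective_doubling_add_toNat n, surjective_doubling_add_toNat n⟩

theorem parityEquiv_apply (ε : Bool) (k : ZMod n) :
    parityEquiv n (ε, k) = doubling n k + ε.toNat :=
  rfl

theorem parityEquiv_false_add_one (k : ZMod n) :
    parityEquiv n (false, k) + 1 = parityEquiv n (true, k) := by
  simp [parityEquiv_apply]

theorem parityEquiv_true_add_one (k : ZMod n) :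
    parityEquiv n (true, k) + 1 = parityEquiv n (false, k + 1) := by
  simp [parityEquiv_apply, doubling_one, add_assoc, one_add_one_eq_two]

end Doubling

namespace TannerGraph

variable {G : Type*} {A B : Matrix G G (ZMod 2)} {r c : G}

theorem adj_X_L : (TannerGraph A B).Adj (.X, r) (.L, c) ↔ A r c = 1 := by
  simp [TannerGraph]

theorem adj_X_R : (TannerGraph A B).Adj (.X, r) (.R, c) ↔ B r c = 1 := by
  simp [TannerGraph]

theorem adj_Z_L : (TannerGraph A B).Adj (.Z, r) (.L, c) ↔ B c r = 1 := by
  simp [TannerGraph]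

theorem adj_Z_R : (TannerGraph A B).Adj (.Z, r) (.R, c) ↔ A c r = 1 := by
  simp [TannerGraph]

end TannerGraph

/-- The monomial `P(g)` occurs in `A`: every entry of `A` in the support of `P(g)` is `1`. -/
def ContainsShift {G : Type*} [Add G] (A : Matrix G G (ZMod 2)) (g : G) : Prop :=
  ∀ h, A (g + h) h = 1

theorem ContainsShift.apply_of_sub_eq {G : Type*} [AddGroup G] {A : Matrix G G (ZMod 2)}
    {g r c : G} (hA : ContainsShift A g) (h : r - c = g) : A r c = 1 := by
  rw [sub_eq_iff_eq_add.mp h]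
  exact hA c

section Layout

variable {G : Type*} [AddCommGroup G]

/-- The corner of a unit cell holding each vertex type, as the parities of its two coordinates:
`X` and `L` alternate along even rows, `R` and `Z` along odd rows. -/
def cornerEquiv : VType ≃ Bool × Bool where
  toFun
    | .X => (false, false)
    | .L => (true, false)
    | .R => (false, true)
    | .Z => (true, true)
  invFun
    | (false, false) => .X
    | (true, false) => .L
    | (false, true) => .R
    | (true, true) => .Z
  left_inv := by rintro (_ | _ | _ | _) <;> rfl
  right_inv := by rintro ⟨_ | _, _ | _⟩ <;> rfl

/-- The difference between the label of a unit cell and the index of its vertex of each type. -/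
def cellOffset (a b : G) : VType → G
  | .X => 0
  | .L => a
  | .R => b
  | .Z => a + b

/-- The vertex of type `t` in the unit cell labelled `w`. -/
def cellVertex (a b : G) (t : VType) (w : G) : VType × G :=
  (t, w - cellOffset a b t)

theorem exists_cellVertex_eq (a b : G) (u : VType × G) : ∃ t w, cellVertex a b t w = u :=
  ⟨u.1, u.2 + cellOffset a b u.1, by simp [cellVertex]⟩

section Adjacency

variable {A B : Matrix G G (ZMod 2)} {a a' b b' : G}

theorem adj_cellVertex_X_L (ha : ContainsShift A a) (w : G) :
    (TannerGraph A B).Adj (cellVertex a b .X w) (cellVertex a b .L w) :=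
  TannerGraph.adj_X_L.mpr (ha.apply_of_sub_eq (by simp [cellOffset]))

theorem adj_cellVertex_Z_R (ha : ContainsShift A a) (w : G) :
    (TannerGraph A B).Adj (cellVertex a b .Z w) (cellVertex a b .R w) :=
  TannerGraph.adj_Z_R.mpr (ha.apply_of_sub_eq (by simp [cellOffset]))

theorem adj_cellVertex_X_R (hb : ContainsShift B b) (w : G) :
    (TannerGraph A B).Adj (cellVertex a b .X w) (cellVertex a b .R w) :=
  TannerGraph.adj_X_R.mpr (hb.apply_of_sub_eq (by simp [cellOffset]))

theorem adj_cellVertex_Z_L (hb : ContainsShift B b) (w : G) :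
    (TannerGraph A B).Adj (cellVertex a b .Z w) (cellVertex a b .L w) :=
  TannerGraph.adj_Z_L.mpr (hb.apply_of_sub_eq (by simp [cellOffset]))

theorem adj_cellVertex_X_add_L (ha' : ContainsShift A a') (w : G) :
    (TannerGraph A B).Adj (cellVertex a b .X (w + (a' - a))) (cellVertex a b .L w) :=
  TannerGraph.adj_X_L.mpr (ha'.apply_of_sub_eq (by simp only [cellOffset]; abel))

theorem adj_cellVertex_Z_R_add (ha' : ContainsShift A a') (w : G) :
    (TannerGraph A B).Adj (cellVertex a b .Z w) (cellVertex a b .R (w + (a' - a))) :=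
  TannerGraph.adj_Z_R.mpr (ha'.apply_of_sub_eq (by simp only [cellOffset]; abel))

theorem adj_cellVertex_X_add_R (hb' : ContainsShift B b') (w : G) :
    (TannerGraph A B).Adj (cellVertex a b .X (w + (b' - b))) (cellVertex a b .R w) :=
  TannerGraph.adj_X_R.mpr (hb'.apply_of_sub_eq (by simp only [cellOffset]; abel))

theorem adj_cellVertex_Z_L_add (hb' : ContainsShift B b') (w : G) :
    (TannerGraph A B).Adj (cellVertex a b .Z w) (cellVertex a b .L (w + (b' - b))) :=
  TannerGraph.adj_Z_L.mpr (hb'.apply_of_sub_eq (by simp only [cellOffset]; abel))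

end Adjacency

/-- The position on the torus of each vertex of the Tanner graph, when the unit cell labelled
`φ (i, j)` occupies the square with lower left corner `(2i, 2j)`. -/
noncomputable def toricPosition {μ lam : ℕ} (φ : ZMod μ × ZMod lam ≃+ G) (a b : G) :
    VType × G ≃ ZMod (2 * μ) × ZMod (2 * lam) :=
  ((cornerEquiv.prodShear fun t => (Equiv.addRight (cellOffset a b t)).trans φ.symm.toEquiv).trans
    (.prodProdProdComm _ _ _ _)).trans (.prodCongr (parityEquiv μ) (parityEquiv lam))

variable {μ lam : ℕ} {φ : ZMod μ × ZMod lam ≃+ G} {A B : Matrix G G (ZMod 2)} {a a' b b' : G}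

theorem toricPosition_cellVertex (t : VType) (w : G) :
    toricPosition φ a b (cellVertex a b t w) =
      (parityEquiv μ ((cornerEquiv t).1, (φ.symm w).1),
        parityEquiv lam ((cornerEquiv t).2, (φ.symm w).2)) := by
  simp [toricPosition, cellVertex]

theorem exists_adj_toricPosition_eq_add_right (ha : ContainsShift A a) (ha' : ContainsShift A a')
    (hφ : φ (1, 0) = a' - a) (u : VType × G) :
    ∃ v, (TannerGraph A B).Adj u v ∧
      toricPosition φ a b v = toricPosition φ a b u + (1, 0) := by
  obtain ⟨t, w, rfl⟩ := exists_cellVertex_eq a b u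
  have next_cell : φ.symm (w + (a' - a)) = φ.symm w + (1, 0) := by
    rw [← hφ, map_add, φ.symm_apply_apply]
  cases t
  case X =>
    refine ⟨cellVertex a b .L w, adj_cellVertex_X_L ha w, ?_⟩
    simp [toricPosition_cellVertex, cornerEquiv, parityEquiv_false_add_one]
  case L =>
    refine ⟨cellVertex a b .X (w + (a' - a)), (adj_cellVertex_X_add_L ha' w).symm, ?_⟩
    simp [toricPosition_cellVertex, cornerEquiv, parityEquiv_true_add_one, next_cell]
  case R =>
    refine ⟨cellVertex a b .Z w, (adj_cellVertex_Z_R ha w).symm, ?_⟩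
    simp [toricPosition_cellVertex, cornerEquiv, parityEquiv_false_add_one]
  case Z =>
    refine ⟨cellVertex a b .R (w + (a' - a)), adj_cellVertex_Z_R_add ha' w, ?_⟩
    simp [toricPosition_cellVertex, cornerEquiv, parityEquiv_true_add_one, next_cell]

theorem exists_adj_toricPosition_eq_add_up (hb : ContainsShift B b) (hb' : ContainsShift B b')
    (hφ : φ (0, 1) = b' - b) (u : VType × G) :
    ∃ v, (TannerGraph A B).Adj u v ∧
      toricPosition φ a b v = toricPosition φ a b u + (0, 1) := by
  obtain ⟨t, w, rfl⟩ := exists_cellVertex_eq a b u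
  have next_cell : φ.symm (w + (b' - b)) = φ.symm w + (0, 1) := by
    rw [← hφ, map_add, φ.symm_apply_apply]
  cases t
  case X =>
    refine ⟨cellVertex a b .R w, adj_cellVertex_X_R hb w, ?_⟩
    simp [toricPosition_cellVertex, cornerEquiv, parityEquiv_false_add_one]
  case R =>
    refine ⟨cellVertex a b .X (w + (b' - b)), (adj_cellVertex_X_add_R hb' w).symm, ?_⟩
    simp [toricPosition_cellVertex, cornerEquiv, parityEquiv_true_add_one, next_cell]
  case L =>
    refine ⟨cellVertex a b .Z w, (adj_cellVertex_Z_L hb w).symm, ?_⟩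
    simp [toricPosition_cellVertex, cornerEquiv, parityEquiv_false_add_one]
  case Z =>
    refine ⟨cellVertex a b .L (w + (b' - b)), adj_cellVertex_Z_L_add hb' w, ?_⟩
    simp [toricPosition_cellVertex, cornerEquiv, parityEquiv_true_add_one, next_cell]

variable (φ) in
theorem hasToricLayout_tannerGraph (ha : ContainsShift A a) (ha' : ContainsShift A a')
    (hb : ContainsShift B b) (hb' : ContainsShift B b')
    (hφ_right : φ (1, 0) = a' - a) (hφ_up : φ (0, 1) = b' - b) :
    HasToricLayout (TannerGraph A B) μ lam :=
  hasToricLayout_of_equiv (toricPosition φ a b)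
    (exists_adj_toricPosition_eq_add_right ha ha' hφ_right)
    (exists_adj_toricPosition_eq_add_up hb hb' hφ_up)

end Layout

section Pmat

variable {G : Type*} [AddGroup G] [DecidableEq G]

theorem containsShift_sum_Pmat {S : Finset G} {g : G} (hg : g ∈ S) :
    ContainsShift (∑ s ∈ S, Pmat s) g := by
  intro h
  simp [Pmat, Matrix.sum_apply, hg]

theorem Pmat_mul [Fintype G] (g h : G) : Pmat g * Pmat h = Pmat (g + h) := by
  ext r c
  simp [Pmat, Matrix.mul_apply, add_assoc]

theorem Pmat_zero : Pmat (0 : G) = 1 := by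
  ext r c
  simp [Pmat, Matrix.one_apply]

theorem Pmat_pow [Fintype G] (g : G) (k : ℕ) : Pmat g ^ k = Pmat (k • g) := by
  induction k with
  | zero => rw [pow_zero, zero_nsmul, Pmat_zero]
  | succ k ih => rw [pow_succ, ih, Pmat_mul, succ_nsmul]

end Pmat

theorem Amat_eq_sum_Pmat : Amat = ∑ s ∈ {(1, 4), (1, 0)}, Pmat s := by
  rw [Finset.sum_pair (by decide), Amat, xP, zP, Pmat_pow, add_comm]
  rfl

theorem Bmat_eq_sum_Pmat : Bmat = ∑ s ∈ {(1, 0), (0, 2), (2, 2)}, Pmat s := by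
  rw [Finset.sum_insert (by decide), Finset.sum_pair (by decide), Bmat, xP, yP, zP, Pmat_pow,
    Pmat_pow, add_assoc]
  rfl

theorem containsShift_Amat {g : ZMod 3 × ZMod 5} (hg : g ∈ ({(1, 4), (1, 0)} : Finset _)) :
    ContainsShift Amat g :=
  Amat_eq_sum_Pmat ▸ containsShift_sum_Pmat hg

theorem containsShift_Bmat {g : ZMod 3 × ZMod 5}
    (hg : g ∈ ({(1, 0), (0, 2), (2, 2)} : Finset _)) : ContainsShift Bmat g :=
  Bmat_eq_sum_Pmat ▸ containsShift_sum_Pmat hg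

/-- The Tanner graph of the weight-5 `[[30,4,5]]` trivariate bicycle code
(`l = 3`, `m = 5`, `A = x + z⁴`, `B = x + y² + z²`) has a spanning subgraph
isomorphic to the Cayley graph of `ZMod 10 × ZMod 6`, i.e. the code has a toric
layout with `μ = 5` and `λ = 3`. -/
theorem stmt17 :
    ∃ H : SimpleGraph (VType × (ZMod 3 × ZMod 5)), H ≤ TannerGraph Amat Bmat ∧
      Nonempty (H ≃g CayleyGraph 5 3) := by
  have hA_z4 : ContainsShift Amat (1, 4) := containsShift_Amat (by decide)
  have hA_x : ContainsShift Amat (1, 0) := containsShift_Amat (by decide)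
  have hB_z2 : ContainsShift Bmat (2, 2) := containsShift_Bmat (by decide)
  have hB_y2 : ContainsShift Bmat (0, 2) := containsShift_Bmat (by decide)
  exact hasToricLayout_tannerGraph AddEquiv.prodComm hA_z4 hA_x hB_z2 hB_y2 (by decide) (by decide)
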